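/- Three-dimensional middle-time piece estimate: fix 2 < r < 6. For any t > 0, any B > 0, any measurable interval I ⊆ [t/2, max(t/2, t−B)], and any measurable u : I × ℝ³ → ℂ, one has ‖ ∫_I e^{i(t−s)Δ} (|u|^{4/3}u)(s) ds ‖_{L^r_x(ℝ³)} ≤ C B^{−3(r−2)/(4r)} ‖u‖^{7/3}_{L^{28r/(3(r+6))}_s L^{7r/(3(r−1))}_x(I×ℝ³)}, with C depending only on r. -/

import Mathlib

open MeasureTheory Set
open scoped ENNReal Real

noncomputable section

/-- The free Schrödinger propagator `e^{itΔ}` acting on functions on a `d`-dimensional space: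
for `t ≠ 0`, `(e^{itΔ}f)(x) = (4πit)^{-d/2} ∫ e^{i|x-y|²/(4t)} f(y) dy`, and `e^{i0Δ}f = f`. -/
def schrod {E : Type*} [NormedAddCommGroup E] [MeasureSpace E] (d : ℕ) (t : ℝ) (f : E → ℂ) :
    E → ℂ :=
  if t = 0 then f
  else fun x =>
    (4 * (Real.pi : ℂ) * Complex.I * (t : ℂ)) ^ (-(d : ℂ) / 2) *
      ∫ y, Complex.exp (Complex.I * ((‖x - y‖ ^ 2 : ℝ) : ℂ) / (4 * (t : ℂ))) * f y

/-- Mixed Lebesgue norm `‖u‖_{L^p_t L^q_x (I × space)}`. -/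
def mixedNorm {α : Type*} [MeasurableSpace α] (ν : Measure α) (I : Set ℝ) (p q : ℝ≥0∞)
    (u : ℝ → α → ℂ) : ℝ≥0∞ :=
  if p = ∞ then essSup (fun t => eLpNorm (u t) q ν) (volume.restrict I)
  else (∫⁻ t in I, eLpNorm (u t) q ν ^ p.toReal) ^ (1 / p.toReal)

/-- Lorentz quasinorm `p^{1/q} ‖ λ · ν({g > λ})^{1/p} ‖_{L^q((0,∞), dλ/λ)}`
for an `ℝ≥0∞`-valued function `g`. -/
def lorentzNorm {α : Type*} [MeasurableSpace α] (ν : Measure α) (p q : ℝ≥0∞)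
    (g : α → ℝ≥0∞) : ℝ≥0∞ :=
  if q = ∞ then
    ⨆ l ∈ Set.Ioi (0 : ℝ), ENNReal.ofReal l * ν {x | ENNReal.ofReal l < g x} ^ p⁻¹.toReal
  else
    (p * ∫⁻ l in Set.Ioi (0 : ℝ),
        (ENNReal.ofReal l * ν {x | ENNReal.ofReal l < g x} ^ p⁻¹.toReal) ^ q.toReal /
          ENNReal.ofReal l) ^ q⁻¹.toReal

/-- Lorentz quasinorm `‖f‖_{L^{p,q}}` of a scalar function. -/
def lorentzNormC {α : Type*} [MeasurableSpace α] (ν : Measure α) (p q : ℝ≥0∞)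
    (f : α → ℂ) : ℝ≥0∞ :=
  lorentzNorm ν p q fun x => (‖f x‖₊ : ℝ≥0∞)

/-- Lorentz-in-time mixed norm `‖u‖_{L^{p,q}_t L^r_x (I × space)}`. -/
def lorentzMixedNorm {α : Type*} [MeasurableSpace α] (ν : Measure α) (I : Set ℝ)
    (p q r : ℝ≥0∞) (u : ℝ → α → ℂ) : ℝ≥0∞ :=
  lorentzNorm (volume.restrict I) p q fun t => eLpNorm (u t) r ν

/-- The nonlinearity `|f|^a f`. -/
def nonlin {E : Type*} (a : ℝ) (f : E → ℂ) : E → ℂ := fun x => ((‖f x‖ ^ a : ℝ) : ℂ) * f x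

open scoped FourierTransform SchwartzMap

/-!
By Minkowski's inequality the `L^r` norm of the Duhamel integral is at most the time integral of
the `L^r` norms of `e^{i(t-s)Δ}(|u|^a u)(s)`. Up to rescaling and a factor of modulus one,
`e^{iτΔ} f` is the Fourier transform of `e^{i|y|²/(4τ)} f`, so the Hausdorff–Young inequality gives
the decay `‖e^{iτΔ} f‖_{L^r} ≲ |τ|^{-d(1/2-1/r)} ‖f‖_{L^{r'}}`. Hausdorff–Young itself is
interpolated between `L¹ → L^∞` and Plancherel by cutting `f`, at each level `l` of `𝓕 f`, at the
height where the tail of `f` contributes at most `l / 2`. Hölder's inequality in time then leaves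
the `L^m` norm of `(t-s)^{-d(1/2-1/r)}` over `t - s ≥ B`, which is the power of `B` claimed, and the
exponents are such that the other factor is a power of the mixed norm of `u`.
-/

section Minkowski

variable {S X : Type*} [MeasurableSpace S] [MeasurableSpace X] {μ : Measure S} {ν : Measure X}

lemma eLpNorm_ofReal_exponent {E : Type*} [ENorm E] {r : ℝ} (hr : 0 < r) (f : X → E) :
    eLpNorm f (ENNReal.ofReal r) ν = (∫⁻ x, ‖f x‖ₑ ^ r ∂ν) ^ (1 / r) := by
  rw [eLpNorm_eq_lintegral_rpow_enorm_toReal (by simpa using hr) ENNReal.ofReal_ne_top,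
    ENNReal.toReal_ofReal hr.le]

/- If `N = ∫ G ^ r`, Hölder in `x` gives `N ≤ R * N ^ (1 / r')` with `R` the right-hand side, and
finiteness of `N` allows dividing by `N ^ (1 / r')`. -/
lemma lintegral_rpow_le_of_le_lintegral [SFinite μ] [SFinite ν] {r : ℝ} (hr : 1 < r)
    {F : S → X → ℝ≥0∞} (hF : Measurable (Function.uncurry F)) {G : X → ℝ≥0∞} (hG : Measurable G)
    (hGF : ∀ x, G x ≤ ∫⁻ s, F s x ∂μ) (hfin : ∫⁻ x, G x ^ r ∂ν ≠ ∞) :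
    (∫⁻ x, G x ^ r ∂ν) ^ (1 / r) ≤ ∫⁻ s, (∫⁻ x, F s x ^ r ∂ν) ^ (1 / r) ∂μ := by
  set N := ∫⁻ x, G x ^ r ∂ν
  set r' := r.conjExponent
  have hconj : r.HolderConjugate r' := .conjExponent hr
  have holder (s : S) :
      ∫⁻ x, F s x * G x ^ (r - 1) ∂ν ≤ (∫⁻ x, F s x ^ r ∂ν) ^ (1 / r) * N ^ (1 / r') := by
    refine (ENNReal.lintegral_mul_le_Lp_mul_Lq ν hconj hF.of_uncurry_left.aemeasurable
      (hG.pow_const _).aemeasurable).trans_eq ?_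
    simp_rw [← ENNReal.rpow_mul, hconj.sub_one_mul_conj, N]
  have absorb : N ≤ (∫⁻ s, (∫⁻ x, F s x ^ r ∂ν) ^ (1 / r) ∂μ) * N ^ (1 / r') :=
    calc N = ∫⁻ x, G x * G x ^ (r - 1) ∂ν := by
          refine lintegral_congr fun x => ?_
          nth_rw 2 [← ENNReal.rpow_one (G x)]
          rw [← ENNReal.rpow_add_of_nonneg _ _ zero_le_one (sub_nonneg.2 hr.le), add_sub_cancel]
      _ ≤ ∫⁻ x, (∫⁻ s, F s x ∂μ) * G x ^ (r - 1) ∂ν := by gcongr with x; exact hGF x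
      _ = ∫⁻ x, ∫⁻ s, F s x * G x ^ (r - 1) ∂μ ∂ν :=
          lintegral_congr fun x => (lintegral_mul_const _ hF.of_uncurry_right).symm
      _ = ∫⁻ s, ∫⁻ x, F s x * G x ^ (r - 1) ∂ν ∂μ :=
          lintegral_lintegral_swap
            ((hF.comp measurable_swap).mul ((hG.comp measurable_fst).pow_const _)).aemeasurable
      _ ≤ ∫⁻ s, (∫⁻ x, F s x ^ r ∂ν) ^ (1 / r) * N ^ (1 / r') ∂μ := lintegral_mono holder
      _ = _ := lintegral_mul_const _ ((hF.pow_const r).lintegral_prod_right'.pow_const _)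
  obtain hN | hN := eq_or_ne N 0
  · simp [hN, (zero_lt_one.trans hr)]
  have split : N ^ (1 / r) * N ^ (1 / r') = N := by
    rw [← ENNReal.rpow_add _ _ hN hfin, hconj.one_div_add_one_div, div_one, ENNReal.rpow_one]
  refine (ENNReal.mul_le_mul_iff_left (c := N ^ (1 / r')) ?_
    (ENNReal.rpow_ne_top_of_ne_zero hN hfin)).1 (split.trans_le absorb)
  simp [ENNReal.rpow_eq_zero_iff, hN, hfin]

lemma exists_measurable_le_lintegral_lt_top [SigmaFinite ν] {f : X → ℝ≥0∞} {L : ℝ≥0∞}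
    (hL : L < ∫⁻ x, f x ∂ν) :
    ∃ g : X → ℝ≥0∞, Measurable g ∧ g ≤ f ∧ ∫⁻ x, g x ∂ν < ∞ ∧ L < ∫⁻ x, g x ∂ν := by
  rw [lintegral_eq_nnreal] at hL
  simp only [lt_iSup_iff] at hL
  obtain ⟨φ, hφf, hLφ⟩ := hL
  rw [← SimpleFunc.lintegral_eq_lintegral] at hLφ
  obtain ⟨g, hgφ, hgfin, hLg⟩ := SimpleFunc.exists_lt_lintegral_simpleFunc_of_lt_lintegral hLφ
  exact ⟨fun x => g x, by fun_prop, fun x => (ENNReal.coe_le_coe.2 (hgφ x)).trans (hφf x),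
    hgfin, hLg⟩

theorem lintegral_rpow_lintegral_le [SFinite μ] [SigmaFinite ν] {r : ℝ} (hr : 1 ≤ r)
    {F : S → X → ℝ≥0∞} (hF : Measurable (Function.uncurry F)) :
    (∫⁻ x, (∫⁻ s, F s x ∂μ) ^ r ∂ν) ^ (1 / r) ≤ ∫⁻ s, (∫⁻ x, F s x ^ r ∂ν) ^ (1 / r) ∂μ := by
  obtain rfl | hr := hr.eq_or_lt
  · simpa using
      (lintegral_lintegral_swap (f := fun x s => F s x) (hF.comp measurable_swap).aemeasurable).le
  have hr0 : 0 < r := zero_lt_one.trans hr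
  rw [one_div, ENNReal.rpow_inv_le_iff hr0]
  refine le_of_forall_lt fun L hL => ?_
  obtain ⟨g, hg, hgF, hgfin, hLg⟩ := exists_measurable_le_lintegral_lt_top hL
  have hgr (x : X) : (g x ^ (1 / r)) ^ r = g x := by
    rw [← ENNReal.rpow_mul, one_div_mul_cancel hr0.ne', ENNReal.rpow_one]
  have key := lintegral_rpow_le_of_le_lintegral (ν := ν) hr hF (hg.pow_const (1 / r))
    (fun x => by simpa only [one_div, ENNReal.rpow_inv_le_iff hr0] using hgF x)
    (by simpa only [hgr] using hgfin.ne)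
  simp only [hgr] at key
  rw [one_div, ENNReal.rpow_inv_le_iff hr0] at key
  exact hLg.trans_le key

theorem eLpNorm_integral_le_lintegral_eLpNorm {E : Type*} [NormedAddCommGroup E] [NormedSpace ℝ E]
    [SFinite μ] [SigmaFinite ν] {r : ℝ} (hr : 1 ≤ r) {F : S → X → E}
    (hF : StronglyMeasurable (Function.uncurry F)) :
    eLpNorm (fun x => ∫ s, F s x ∂μ) (ENNReal.ofReal r) ν ≤
      ∫⁻ s, eLpNorm (F s) (ENNReal.ofReal r) ν ∂μ := by
  have hr0 : 0 < r := zero_lt_one.trans_le hr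
  simp only [eLpNorm_ofReal_exponent hr0]
  refine le_trans ?_ (lintegral_rpow_lintegral_le hr hF.enorm)
  gcongr with x
  exact enorm_integral_le_lintegral_enorm _

end Minkowski

section LayerCake

lemma setLIntegral_Ioc_rpow {s c : ℝ} (hs : -1 < s) (hc : 0 ≤ c) :
    ∫⁻ x in Ioc 0 c, ENNReal.ofReal (x ^ s) = ENNReal.ofReal (c ^ (s + 1) / (s + 1)) := by
  rw [← ofReal_integral_eq_lintegral_ofReal (intervalIntegral.intervalIntegrable_rpow' hs).1
      ((ae_restrict_mem measurableSet_Ioc).mono fun x hx => Real.rpow_nonneg hx.1.le s),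
    ← intervalIntegral.integral_of_le hc, integral_rpow (.inl hs),
    Real.zero_rpow (by linarith), sub_zero]

lemma setLIntegral_Ioi_rpow {s c : ℝ} (hs : s < -1) (hc : 0 < c) :
    ∫⁻ x in Ioi c, ENNReal.ofReal (x ^ s) = ENNReal.ofReal (-c ^ (s + 1) / (s + 1)) := by
  rw [← ofReal_integral_eq_lintegral_ofReal (integrableOn_Ioi_rpow_of_lt hs hc)
      ((ae_restrict_mem measurableSet_Ioi).mono fun x hx => Real.rpow_nonneg (hc.trans hx).le s),
    integral_Ioi_rpow_of_lt hs hc]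

lemma setLIntegral_Ioi_indicator_rpow_mul_rpow_le {a c p s κ : ℝ} (ha : 0 ≤ a) (hc : 0 < c)
    (hp : 0 < p) (hs : 0 < s) :
    ∫⁻ l in Ioi 0, {l | l * a ^ κ ≤ c}.indicator
        (fun l => ENNReal.ofReal (l ^ (s - 1)) * ENNReal.ofReal (a ^ p)) l ≤
      ENNReal.ofReal (c ^ s / s) * ENNReal.ofReal (a ^ (p - κ * s)) := by
  obtain rfl | ha := ha.eq_or_lt
  · simp [Real.zero_rpow hp.ne']
  have haκ : 0 < a ^ κ := Real.rpow_pos_of_pos ha κ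
  have hset : {l | l * a ^ κ ≤ c} = Iic (c / a ^ κ) := by ext l; simp [le_div_iff₀ haκ]
  rw [hset, setLIntegral_indicator measurableSet_Iic, inter_comm, Ioi_inter_Iic,
    lintegral_mul_const _ (by fun_prop), setLIntegral_Ioc_rpow (by linarith) (by positivity),
    sub_add_cancel, ← ENNReal.ofReal_mul (by positivity), ← ENNReal.ofReal_mul (by positivity),
    Real.div_rpow hc.le haκ.le, ← Real.rpow_mul ha.le, Real.rpow_sub ha]
  exact (congrArg ENNReal.ofReal (by ring)).le

variable {X Y : Type*} [MeasurableSpace X] [MeasurableSpace Y] {μ : Measure X} {ν : Measure Y}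

/- The layer-cake formula turns the left-hand side into an integral over the levels `l`; exchanging
the two integrals, the levels that see a given `x` are those below `c / N x ^ κ`. -/
theorem lintegral_rpow_le_of_meas_lt_le [SFinite μ] {N : X → ℝ} (hN : Measurable N)
    (hN0 : ∀ x, 0 ≤ N x) {g : Y → ℝ} (hg : AEMeasurable g ν) (hg0 : 0 ≤ᵐ[ν] g)
    {A c p r κ : ℝ} (hA : 0 ≤ A) (hc : 0 < c) (hp : 0 < p) (hpr : p < r)
    (h : ∀ l, 0 < l → ν {y | l < g y} ≤
      ENNReal.ofReal (A * l ^ (-p)) * ∫⁻ x in {x | l * N x ^ κ ≤ c}, ENNReal.ofReal (N x ^ p) ∂μ) :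
    ∫⁻ y, ENNReal.ofReal (g y ^ r) ∂ν ≤
      ENNReal.ofReal (r * A * (c ^ (r - p) / (r - p))) *
        ∫⁻ x, ENNReal.ofReal (N x ^ (p - κ * (r - p))) ∂μ := by
  have hr : 0 < r := hp.trans hpr
  have hs : 0 < r - p := sub_pos.2 hpr
  let K (l : ℝ) (x : X) : ℝ≥0∞ := {l | l * N x ^ κ ≤ c}.indicator
    (fun l => ENNReal.ofReal (l ^ (r - p - 1)) * ENNReal.ofReal (N x ^ p)) l
  have hK : Measurable (Function.uncurry K) := by
    change Measurable ({z : ℝ × X | z.1 * N z.2 ^ κ ≤ c}.indicator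
      fun z => ENNReal.ofReal (z.1 ^ (r - p - 1)) * ENNReal.ofReal (N z.2 ^ p))
    exact Measurable.indicator (by fun_prop) (measurableSet_le (by fun_prop) measurable_const)
  have layer (l : ℝ) (hl : 0 < l) : ν {y | l < g y} * ENNReal.ofReal (l ^ (r - 1)) ≤
      ENNReal.ofReal A * ∫⁻ x, K l x ∂μ := by
    have weight : A * l ^ (-p) * l ^ (r - 1) = A * l ^ (r - p - 1) := by
      rw [mul_assoc, ← Real.rpow_add hl]; ring_nf
    have inner : ∫⁻ x, K l x ∂μ = ENNReal.ofReal (l ^ (r - p - 1)) *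
        ∫⁻ x in {x | l * N x ^ κ ≤ c}, ENNReal.ofReal (N x ^ p) ∂μ := by
      rw [← lintegral_const_mul _ (by fun_prop), ← lintegral_indicator
        (measurableSet_le (by fun_prop) measurable_const)]
      rfl
    grw [h l hl, inner, mul_right_comm, ← ENNReal.ofReal_mul (by positivity), weight,
      ENNReal.ofReal_mul hA, mul_assoc]
  rw [lintegral_rpow_eq_lintegral_meas_lt_mul ν hg0 hg hr]
  calc ENNReal.ofReal r * ∫⁻ l in Ioi 0, ν {y | l < g y} * ENNReal.ofReal (l ^ (r - 1))
      ≤ ENNReal.ofReal r * ∫⁻ l in Ioi 0, ENNReal.ofReal A * ∫⁻ x, K l x ∂μ :=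
        mul_le_mul_right (setLIntegral_mono' measurableSet_Ioi layer) _
    _ = ENNReal.ofReal r * (ENNReal.ofReal A * ∫⁻ x, (∫⁻ l in Ioi 0, K l x) ∂μ) := by
        rw [lintegral_const_mul' _ _ ENNReal.ofReal_ne_top,
          lintegral_lintegral_swap hK.aemeasurable]
    _ ≤ ENNReal.ofReal r * (ENNReal.ofReal A * ∫⁻ x, ENNReal.ofReal (c ^ (r - p) / (r - p)) *
          ENNReal.ofReal (N x ^ (p - κ * (r - p))) ∂μ) := by
        gcongr with x
        exact setLIntegral_Ioi_indicator_rpow_mul_rpow_le (hN0 x) hc hp hs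
    _ = _ := by
        rw [lintegral_const_mul' _ _ ENNReal.ofReal_ne_top, ← mul_assoc, ← mul_assoc,
          ← ENNReal.ofReal_mul hr.le, ← ENNReal.ofReal_mul (by positivity)]

end LayerCake

section Fourier

variable {V F : Type*} [NormedAddCommGroup V] [InnerProductSpace ℝ V] [FiniteDimensional ℝ V]
  [MeasurableSpace V] [BorelSpace V] [NormedAddCommGroup F]

lemma ofReal_norm_rpow (v : F) {a : ℝ} (ha : 0 ≤ a) : ENNReal.ofReal (‖v‖ ^ a) = ‖v‖ₑ ^ a := by
  rw [← ENNReal.ofReal_rpow_of_nonneg (norm_nonneg v) ha, ofReal_norm]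

lemma setLIntegral_enorm_le_mul_lintegral_rpow {X : Type*} [MeasurableSpace X] {μ : Measure X}
    {f : X → F} {S : Set X} (hS : MeasurableSet S) {c l q : ℝ} (hl : 0 ≤ l) (hc : 0 < c)
    (hq : 0 ≤ q) (hfS : ∀ x ∈ S, c ≤ l * ‖f x‖ ^ (q - 1)) :
    ∫⁻ x in S, ‖f x‖ₑ ∂μ ≤ ENNReal.ofReal (l / c) * ∫⁻ x, ‖f x‖ₑ ^ q ∂μ := by
  rw [← lintegral_const_mul' _ _ ENNReal.ofReal_ne_top]
  refine (setLIntegral_mono' hS fun x hx => ?_).trans (setLIntegral_le_lintegral _ _)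
  rw [← ofReal_norm_rpow _ hq, ← ofReal_norm, ← ENNReal.ofReal_mul (by positivity)]
  refine ENNReal.ofReal_le_ofReal ?_
  obtain h0 | h0 := (norm_nonneg (f x)).eq_or_lt
  · rw [← h0]
    positivity
  calc ‖f x‖ = c * ‖f x‖ / c := by field_simp
    _ ≤ l * ‖f x‖ ^ (q - 1) * ‖f x‖ / c := by gcongr; exact hfS x hx
    _ = l / c * ‖f x‖ ^ q := by
      rw [Real.rpow_sub_one h0.ne']
      field_simp

section NormedSpace

variable [NormedSpace ℂ F]

lemma continuous_fourier_of_integrable {f : V → F} (hf : Integrable f) : Continuous (𝓕 f) :=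
  VectorFourier.fourierIntegral_continuous Real.continuous_fourierChar
    (innerSL ℝ).continuous₂ hf

lemma fourier_add_of_integrable {f g : V → F} (hf : Integrable f) (hg : Integrable g) :
    𝓕 (f + g) = 𝓕 f + 𝓕 g :=
  VectorFourier.fourierIntegral_add Real.continuous_fourierChar (innerSL ℝ).continuous₂ hf hg

lemma enorm_fourier_le (f : V → F) (ξ : V) : ‖𝓕 f ξ‖ₑ ≤ ∫⁻ y, ‖f y‖ₑ := by
  rw [Real.fourier_eq]
  refine (enorm_integral_le_lintegral_enorm _).trans_eq (lintegral_congr fun y => ?_)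
  rw [enorm_eq_iff_norm_eq, Circle.norm_smul]

lemma fourier_eq_zero_of_ae_eq_zero {f : V → F} (hf : f =ᵐ[volume] 0) : 𝓕 f = 0 := by
  ext ξ
  rw [Real.fourier_congr_ae hf, Real.fourier_eq]
  simp

end NormedSpace

variable [InnerProductSpace ℂ F] [CompleteSpace F]

/- Both sides have the same integral against every test function: the pairing identity
`∫ 𝓕 ψ * f = ∫ ψ * 𝓕 f` is the definition of the distributional Fourier transform. -/
lemma fourier_ae_eq_fourier_toLp {f : V → F} (hf : Integrable f) (hf2 : MemLp f 2) :
    𝓕 f =ᵐ[volume] (𝓕 (hf2.toLp f) : Lp F 2 (volume : Measure V)) := by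
  refine ae_eq_of_integral_contDiff_smul_eq
    (continuous_fourier_of_integrable hf).locallyIntegrable
    ((Lp.memLp _).locallyIntegrable (by norm_num)) fun φ hφ hφc => ?_
  have hψc : HasCompactSupport (Complex.ofRealCLM ∘ φ) := hφc.comp_left rfl
  let ψ : 𝓢(V, ℂ) := hψc.toSchwartzMap (by fun_prop)
  have pairing : ∫ x, 𝓕 ψ x • f x = ∫ x, ψ x • 𝓕 f x :=
    (VectorFourier.integral_fourierIntegral_smul_eq_flip (L := innerₗ V)
      Real.continuous_fourierChar (innerSL ℝ).continuous₂ ψ.integrable hf).trans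
      (by rw [flip_innerₗ]; rfl)
  have distributional := congrArg (· ψ) (Lp.fourier_toTemperedDistribution_eq (hf2.toLp f))
  simp only [TemperedDistribution.fourier_apply, Lp.toTemperedDistribution_apply] at distributional
  rw [integral_congr_ae (hf2.coeFn_toLp.mono fun x hx => congrArg (𝓕 ψ x • ·) hx), pairing]
    at distributional
  exact distributional

theorem eLpNorm_fourier_two {f : V → F} (hf : Integrable f) (hf2 : MemLp f 2) :
    eLpNorm (𝓕 f) 2 volume = eLpNorm f 2 volume := by
  rw [eLpNorm_congr_ae (fourier_ae_eq_fourier_toLp hf hf2), ← eLpNorm_congr_ae hf2.coeFn_toLp]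
  have isometry := Lp.norm_fourier_eq (hf2.toLp f)
  rw [Lp.norm_def, Lp.norm_def] at isometry
  exact (ENNReal.toReal_eq_toReal_iff' (Lp.memLp _).2.ne (Lp.memLp _).2.ne).1 isometry

/- Away from `S` the Fourier transform is at most `l / 2`, so where `𝓕 f` exceeds `l` the part of
`f` on `S` contributes at least `l / 2`; Chebyshev and Plancherel bound the measure of that set. -/
lemma volume_lt_norm_fourier_le {f : V → F} (hf : Integrable f) {S : Set V} (hS : MeasurableSet S)
    {l : ℝ} (hl : 0 < l) (hSc : ∫⁻ y in Sᶜ, ‖f y‖ₑ ≤ ENNReal.ofReal (l / 2)) :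
    volume {ξ | l < ‖𝓕 f ξ‖} ≤
      ENNReal.ofReal (4 * l ^ (-2 : ℝ)) * ∫⁻ y in S, ‖f y‖ₑ ^ (2 : ℝ) := by
  set g := S.indicator f
  set h := Sᶜ.indicator f
  have hg : Integrable g := hf.indicator hS
  have hh : Integrable h := hf.indicator hS.compl
  have hgh : 𝓕 f = 𝓕 g + 𝓕 h := by
    rw [← fourier_add_of_integrable hg hh, indicator_self_add_compl]
  have hhl (ξ : V) : ‖𝓕 h ξ‖ ≤ l / 2 := by
    rw [← ENNReal.ofReal_le_ofReal_iff (by positivity), ofReal_norm]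
    refine (enorm_fourier_le h ξ).trans ?_
    simpa only [h, enorm_indicator_eq_indicator_enorm, lintegral_indicator hS.compl] using hSc
  have hgS : eLpNorm g 2 volume = (∫⁻ y in S, ‖f y‖ₑ ^ (2 : ℝ)) ^ (1 / 2 : ℝ) := by
    rw [eLpNorm_indicator_eq_eLpNorm_restrict hS,
      eLpNorm_eq_lintegral_rpow_enorm_toReal two_ne_zero ENNReal.ofNat_ne_top,
      ENNReal.toReal_ofNat]
  obtain htop | hfin := eq_or_ne (∫⁻ y in S, ‖f y‖ₑ ^ (2 : ℝ)) ∞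
  · rw [htop, ENNReal.mul_top (ENNReal.ofReal_pos.2 (by positivity)).ne']
    exact le_top
  have hg2 : MemLp g 2 :=
    ⟨hg.1, hgS ▸ ENNReal.rpow_lt_top_of_nonneg (by norm_num) hfin⟩
  calc volume {ξ | l < ‖𝓕 f ξ‖}
      ≤ volume {ξ | ENNReal.ofReal (l / 2) ≤ ‖𝓕 g ξ‖ₑ} := by
        refine measure_mono fun ξ (hξ : l < ‖𝓕 f ξ‖) => ?_
        have triangle : ‖𝓕 f ξ‖ ≤ ‖𝓕 g ξ‖ + ‖𝓕 h ξ‖ := by rw [hgh]; exact norm_add_le _ _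
        rw [mem_ofPred_eq, ← ofReal_norm]
        exact ENNReal.ofReal_le_ofReal (by linarith [hhl ξ])
    _ ≤ (ENNReal.ofReal (l / 2))⁻¹ ^ (2 : ℝ) * eLpNorm (𝓕 g) 2 volume ^ (2 : ℝ) := by
        simpa using meas_ge_le_mul_pow_eLpNorm_enorm volume two_ne_zero ENNReal.ofNat_ne_top
          (continuous_fourier_of_integrable hg).aestronglyMeasurable
          (by simpa using hl) (by simp)
    _ = ENNReal.ofReal (4 * l ^ (-2 : ℝ)) * ∫⁻ y in S, ‖f y‖ₑ ^ (2 : ℝ) := by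
        rw [eLpNorm_fourier_two hg hg2, hgS, ← ENNReal.rpow_mul, one_div_mul_cancel two_ne_zero,
          ENNReal.rpow_one, ← ENNReal.ofReal_inv_of_pos (by positivity),
          ENNReal.ofReal_rpow_of_nonneg (by positivity) zero_le_two, Real.rpow_neg hl.le]
        congr 2
        rw [Real.rpow_two, Real.rpow_two]
        field_simp
        norm_num

lemma lintegral_enorm_fourier_rpow_le {r r' m : ℝ} (hr : 2 < r) (hconj : r.HolderConjugate r')
    {f : V → F} (hfm : StronglyMeasurable f) (hf : Integrable f) (hm : 0 < m)
    (hfr : ∫⁻ y, ‖f y‖ₑ ^ r' = ENNReal.ofReal m) :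
    ∫⁻ ξ, ‖𝓕 f ξ‖ₑ ^ r ≤ ENNReal.ofReal (r * 4 * (2 ^ (r - 2) / (r - 2)) * m ^ (r - 1)) := by
  have hr0 : 0 < r := by linarith
  have hr' : 0 < r' := hconj.symm.pos
  have level (l : ℝ) (hl : 0 < l) : volume {ξ | l < ‖𝓕 f ξ‖} ≤
      ENNReal.ofReal (4 * l ^ (-2 : ℝ)) *
        ∫⁻ y in {y | l * ‖f y‖ ^ (r' - 1) ≤ 2 * m}, ENNReal.ofReal (‖f y‖ ^ (2 : ℝ)) := by
    have hS : MeasurableSet {y | l * ‖f y‖ ^ (r' - 1) ≤ 2 * m} :=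
      measurableSet_le ((hfm.norm.measurable.pow_const _).const_mul l) measurable_const
    simp only [ofReal_norm_rpow _ zero_le_two]
    refine volume_lt_norm_fourier_le hf hS hl ?_
    calc ∫⁻ y in {y | l * ‖f y‖ ^ (r' - 1) ≤ 2 * m}ᶜ, ‖f y‖ₑ
        ≤ ENNReal.ofReal (l / (2 * m)) * ∫⁻ y, ‖f y‖ₑ ^ r' :=
          setLIntegral_enorm_le_mul_lintegral_rpow hS.compl hl.le (by positivity) hr'.le
            fun y hy => le_of_not_ge hy
      _ = ENNReal.ofReal (l / 2) := by
          rw [hfr, ← ENNReal.ofReal_mul (by positivity)]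
          congr 1
          field_simp
  have marcinkiewicz := lintegral_rpow_le_of_meas_lt_le (r := r) hfm.norm.measurable
    (fun y => norm_nonneg _) (continuous_fourier_of_integrable hf).norm.measurable.aemeasurable
    (ae_of_all _ fun ξ => norm_nonneg _) zero_le_four (by positivity) zero_lt_two hr level
  have exponent : 2 - (r' - 1) * (r - 2) = r' := by linarith [hconj.mul_eq_add]
  simp only [exponent, ofReal_norm_rpow _ hr0.le, ofReal_norm_rpow _ hr'.le, hfr] at marcinkiewicz
  refine marcinkiewicz.trans_eq ?_
  rw [← ENNReal.ofReal_mul (by have := sub_pos.2 hr; positivity),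
    Real.mul_rpow zero_le_two hm.le, show r - 1 = r - 2 + 1 by ring, Real.rpow_add_one hm.ne']
  ring_nf

theorem exists_eLpNorm_fourier_le {r r' : ℝ} (hr : 2 < r) (hconj : r.HolderConjugate r') :
    ∃ C : ℝ, 0 < C ∧ ∀ f : V → F, Integrable f →
      eLpNorm (𝓕 f) (ENNReal.ofReal r) volume ≤
        ENNReal.ofReal C * eLpNorm f (ENNReal.ofReal r') volume := by
  have hr0 : 0 < r := by linarith
  have : 0 < r - 2 := sub_pos.2 hr
  have hr' : 0 < r' := hconj.symm.pos
  refine ⟨(r * 4 * (2 ^ (r - 2) / (r - 2))) ^ (1 / r), by positivity, fun f hf => ?_⟩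
  wlog hfm : StronglyMeasurable f generalizing f
  · rw [funext (Real.fourier_congr_ae hf.1.ae_eq_mk), eLpNorm_congr_ae hf.1.ae_eq_mk]
    exact this _ (hf.congr hf.1.ae_eq_mk) hf.1.stronglyMeasurable_mk
  obtain h0 | h0 := eq_or_ne (∫⁻ y, ‖f y‖ₑ ^ r') 0
  · have hf0 : f =ᵐ[volume] 0 := by
      filter_upwards [(lintegral_eq_zero_iff' (hfm.enorm.pow_const r').aemeasurable).1 h0] with y hy
      simpa [hr', hr'.not_gt] using hy
    rw [fourier_eq_zero_of_ae_eq_zero hf0, eLpNorm_zero]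
    exact zero_le
  obtain htop | hfin := eq_or_ne (∫⁻ y, ‖f y‖ₑ ^ r') ∞
  · rw [eLpNorm_ofReal_exponent hr', htop, ENNReal.top_rpow_of_pos (by positivity),
      ENNReal.mul_top (ENNReal.ofReal_pos.2 (by positivity)).ne']
    exact le_top
  set m := (∫⁻ y, ‖f y‖ₑ ^ r').toReal
  have hm : 0 < m := ENNReal.toReal_pos h0 hfin
  have hfr : ∫⁻ y, ‖f y‖ₑ ^ r' = ENNReal.ofReal m := (ENNReal.ofReal_toReal hfin).symm
  rw [eLpNorm_ofReal_exponent hr0, eLpNorm_ofReal_exponent hr', hfr]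
  calc (∫⁻ ξ, ‖𝓕 f ξ‖ₑ ^ r) ^ (1 / r)
      ≤ ENNReal.ofReal (r * 4 * (2 ^ (r - 2) / (r - 2)) * m ^ (r - 1)) ^ (1 / r) := by
        gcongr
        exact lintegral_enorm_fourier_rpow_le hr hconj hfm hf hm hfr
    _ = _ := by
        rw [ENNReal.ofReal_rpow_of_pos (by positivity), ENNReal.ofReal_rpow_of_pos hm,
          ← ENNReal.ofReal_mul (by positivity), Real.mul_rpow (by positivity) (by positivity),
          ← Real.rpow_mul hm.le, ← hconj.div_conj_eq_sub_one, div_mul_div_cancel₀' hr0.ne']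

end Fourier

section Schrodinger

section Chirp

variable {E : Type*} [NormedAddCommGroup E]

/-- The modulation `y ↦ e^{i|y|²/(4τ)} f(y)`. Expanding `|x - y|²` in the kernel of `schrod d τ`
shows that `|e^{iτΔ} f|` is a rescaled `|𝓕 (chirp τ f)|`. -/
def chirp (τ : ℝ) (f : E → ℂ) : E → ℂ := fun y =>
  Complex.exp (((‖y‖ ^ 2 / (4 * τ) : ℝ) : ℂ) * Complex.I) * f y

lemma norm_chirp (τ : ℝ) (f : E → ℂ) (y : E) : ‖chirp τ f y‖ = ‖f y‖ := by
  rw [chirp, norm_mul, Complex.norm_exp_ofReal_mul_I, one_mul]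

variable [InnerProductSpace ℝ E]

lemma exp_mul_eq_fourierKernel_mul_chirp {τ : ℝ} (hτ : τ ≠ 0) (f : E → ℂ) (x y : E) :
    Complex.exp (Complex.I * ((‖x - y‖ ^ 2 : ℝ) : ℂ) / (4 * (τ : ℂ))) * f y =
      Complex.exp (((‖x‖ ^ 2 / (4 * τ) : ℝ) : ℂ) * Complex.I) *
        (Complex.exp (↑(-2 * π * inner ℝ y ((4 * π * τ)⁻¹ • x)) * Complex.I) •
          chirp τ f y) := by
  have hτ' : (τ : ℂ) ≠ 0 := Complex.ofReal_ne_zero.2 hτ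
  have hπ : (π : ℂ) ≠ 0 := Complex.ofReal_ne_zero.2 Real.pi_ne_zero
  rw [chirp, smul_eq_mul, ← mul_assoc, ← mul_assoc, ← Complex.exp_add, ← Complex.exp_add,
    norm_sub_sq_real, inner_smul_right, real_inner_comm]
  congr 2
  push_cast
  field_simp
  ring

end Chirp

variable {E : Type*} [NormedAddCommGroup E] [InnerProductSpace ℝ E] [FiniteDimensional ℝ E]
  [MeasurableSpace E] [BorelSpace E]

lemma norm_schrod {d : ℕ} {τ : ℝ} (hτ : τ ≠ 0) (f : E → ℂ) (x : E) :
    ‖schrod d τ f x‖ =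
      (4 * π * |τ|) ^ (-(d / 2) : ℝ) * ‖𝓕 (chirp τ f) ((4 * π * τ)⁻¹ • x)‖ := by
  have prefactor : ‖(4 * (π : ℂ) * Complex.I * (τ : ℂ)) ^ (-(d : ℂ) / 2)‖ =
      (4 * π * |τ|) ^ (-(d / 2) : ℝ) := by
    rw [show -(d : ℂ) / 2 = ((-(d / 2) : ℝ) : ℂ) by push_cast; ring, Complex.norm_cpow_real]
    simp [abs_of_pos Real.pi_pos]
  rw [schrod, if_neg hτ, norm_mul, prefactor, Real.fourier_eq']
  simp_rw [exp_mul_eq_fourierKernel_mul_chirp hτ f x]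
  rw [integral_const_mul, norm_mul, Complex.norm_exp_ofReal_mul_I, one_mul]

lemma eLpNorm_comp_smul {F : Type*} [NormedAddCommGroup F] (g : E → F) {c r : ℝ} (hc : c ≠ 0)
    (hr : 0 < r) :
    eLpNorm (fun x => g (c • x)) (ENNReal.ofReal r) volume =
      ENNReal.ofReal (|c| ^ (-(Module.finrank ℝ E / r))) *
        eLpNorm g (ENNReal.ofReal r) volume := by
  have hmap := (measurableEmbedding_const_smul₀ (α := E) hc).eLpNorm_map_measure
    (μ := volume) (g := g) (p := ENNReal.ofReal r)
  rw [Measure.map_addHaar_smul volume hc,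
    eLpNorm_smul_measure_of_ne_zero (ENNReal.ofReal_pos.2 (by positivity)).ne', smul_eq_mul] at hmap
  refine hmap.symm.trans ?_
  congr 1
  rw [ENNReal.toReal_div, ENNReal.toReal_one, ENNReal.toReal_ofReal hr.le,
    ENNReal.ofReal_rpow_of_nonneg (abs_nonneg _) (by positivity), abs_inv, abs_pow,
    ← Real.rpow_natCast, ← Real.rpow_neg (abs_nonneg c), ← Real.rpow_mul (abs_nonneg c)]
  congr 2
  ring

/- Junk value: when `chirp τ f` is not integrable, the Bochner integral defining `schrod d τ f`
is `0`. -/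
theorem exists_eLpNorm_schrod_le {d : ℕ} (hd : Module.finrank ℝ E = d) {r r' : ℝ} (hr : 2 < r)
    (hconj : r.HolderConjugate r') :
    ∃ C : ℝ, 0 < C ∧ ∀ τ : ℝ, τ ≠ 0 → ∀ f : E → ℂ,
      eLpNorm (schrod d τ f) (ENNReal.ofReal r) volume ≤
        ENNReal.ofReal (C * |τ| ^ (-(d * (1 / 2 - 1 / r)))) *
          eLpNorm f (ENNReal.ofReal r') volume := by
  obtain ⟨C, hC, hfourier⟩ := exists_eLpNorm_fourier_le (V := E) (F := ℂ) hr hconj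
  refine ⟨C * (4 * π) ^ (-(d * (1 / 2 - 1 / r))), by positivity, fun τ hτ f => ?_⟩
  have hc : 0 < 4 * π * |τ| := by positivity
  have rescaling : eLpNorm (schrod d τ f) (ENNReal.ofReal r) volume =
      ENNReal.ofReal ((4 * π * |τ|) ^ (-(d * (1 / 2 - 1 / r)))) *
        eLpNorm (𝓕 (chirp τ f)) (ENNReal.ofReal r) volume := by
    have hnorm (x : E) : ‖schrod d τ f x‖ =
        ‖((4 * π * |τ|) ^ (-(d / 2) : ℝ) • fun y => 𝓕 (chirp τ f) ((4 * π * τ)⁻¹ • y)) x‖ := by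
      rw [norm_schrod hτ, Pi.smul_apply, norm_smul, Real.norm_of_nonneg (by positivity)]
    rw [eLpNorm_congr_norm_ae (ae_of_all _ hnorm), eLpNorm_const_smul,
      eLpNorm_comp_smul _ (by positivity) (by linarith), ← mul_assoc, hd,
      Real.enorm_of_nonneg (by positivity), ← ENNReal.ofReal_mul (by positivity), abs_inv,
      abs_mul, abs_of_pos (by positivity : 0 < 4 * π), Real.inv_rpow hc.le, ← Real.rpow_neg hc.le,
      ← Real.rpow_add hc]
    congr 3
    ring
  have hausdorffYoung : eLpNorm (𝓕 (chirp τ f)) (ENNReal.ofReal r) volume ≤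
      ENNReal.ofReal C * eLpNorm f (ENNReal.ofReal r') volume := by
    by_cases hint : Integrable (chirp τ f)
    · exact (hfourier _ hint).trans_eq
        (by rw [eLpNorm_congr_norm_ae (ae_of_all _ (norm_chirp τ f))])
    · have hzero : 𝓕 (chirp τ f) = 0 := by
        ext w
        rw [Real.fourier_eq, integral_undef
          (mt (Real.fourierIntegral_convergent_iff w).1 hint), Pi.zero_apply]
      simp [hzero]
  rw [rescaling]
  grw [hausdorffYoung]
  rw [← mul_assoc, ← ENNReal.ofReal_mul (by positivity),
    Real.mul_rpow (by positivity) (abs_nonneg τ), mul_comm _ C, mul_assoc]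

end Schrodinger

section Duhamel

lemma setLIntegral_sub_rpow_neg_le {t B b : ℝ} (hB : 0 < B) (hb : 1 < b) {I : Set ℝ}
    (hI : I ≤ᵐ[volume] Iic (t - B)) :
    ∫⁻ s in I, ENNReal.ofReal ((t - s) ^ (-b)) ≤ ENNReal.ofReal (B ^ (1 - b) / (b - 1)) := by
  calc ∫⁻ s in I, ENNReal.ofReal ((t - s) ^ (-b))
      ≤ ∫⁻ s in Iic (t - B), ENNReal.ofReal ((t - s) ^ (-b)) :=
        lintegral_mono' (Measure.restrict_mono_ae hI) le_rfl
    _ = ∫⁻ τ in Ioi B, ENNReal.ofReal (τ ^ (-b)) := by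
        rw [← lintegral_indicator measurableSet_Iic, setLIntegral_congr Ioi_ae_eq_Ici,
          ← lintegral_indicator measurableSet_Ici,
          ← lintegral_sub_left_eq_self ((Ici B).indicator _) t]
        simp only [indicator, mem_Iic, mem_Ici, le_sub_comm]
    _ = ENNReal.ofReal (B ^ (1 - b) / (b - 1)) := by
        rw [setLIntegral_Ioi_rpow (by linarith) hB, neg_add_eq_sub, neg_div, ← div_neg, neg_sub]

lemma ae_le_Iic_of_subset_Icc_max {a b : ℝ} {I : Set ℝ} (hI : I ⊆ Icc a (max a b)) :
    I ≤ᵐ[volume] Iic b := by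
  have hne : ∀ᵐ s ∂(volume : Measure ℝ), s ≠ a := by simp [ae_iff]
  filter_upwards [hne] with s hs hsI
  obtain ⟨has, hsmax⟩ := hI hsI
  exact (le_max_iff.1 hsmax).resolve_left fun hsa => hs (hsa.antisymm has)

lemma ae_restrict_le_sub {t B : ℝ} {I : Set ℝ} (hI : I ≤ᵐ[volume] Iic (t - B)) :
    ∀ᵐ s ∂volume.restrict I, B ≤ t - s :=
  ae_mono (Measure.restrict_mono_ae hI) <|
    (ae_restrict_mem measurableSet_Iic).mono fun _ hs => le_sub_comm.1 hs

lemma setLIntegral_sub_rpow_neg_rpow_le {t B δ m : ℝ} (hB : 0 < B) (hm0 : 0 < m) (hm : 1 < m * δ)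
    {I : Set ℝ} (hI : I ≤ᵐ[volume] Iic (t - B)) :
    (∫⁻ s in I, ENNReal.ofReal ((t - s) ^ (-δ)) ^ m) ^ (1 / m) ≤
      ENNReal.ofReal ((m * δ - 1) ^ (-(1 / m)) * B ^ (1 / m - δ)) := by
  have hpos : 0 < m * δ - 1 := sub_pos.2 hm
  have integrand : ∀ᵐ s ∂volume.restrict I,
      ENNReal.ofReal ((t - s) ^ (-δ)) ^ m = ENNReal.ofReal ((t - s) ^ (-(m * δ))) := by
    filter_upwards [ae_restrict_le_sub hI] with s hs
    have hts : 0 ≤ t - s := hB.le.trans hs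
    rw [ENNReal.ofReal_rpow_of_nonneg (by positivity) hm0.le, ← Real.rpow_mul hts]
    ring_nf
  rw [lintegral_congr_ae integrand]
  grw [setLIntegral_sub_rpow_neg_le hB hm hI]
  rw [ENNReal.ofReal_rpow_of_nonneg (by positivity) (by positivity),
    Real.div_rpow (by positivity) hpos.le, ← Real.rpow_mul hB.le, Real.rpow_neg hpos.le,
    div_eq_inv_mul, sub_mul, one_mul, mul_one_div, mul_div_cancel_left₀ _ hm0.ne']

lemma mixedNorm_ofReal_exponent {X : Type*} [MeasurableSpace X] (ν : Measure X) (I : Set ℝ)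
    {p : ℝ} (hp : 0 ≤ p) (q : ℝ≥0∞) (u : ℝ → X → ℂ) :
    mixedNorm ν I (ENNReal.ofReal p) q u = (∫⁻ s in I, eLpNorm (u s) q ν ^ p) ^ (1 / p) := by
  rw [mixedNorm, if_neg ENNReal.ofReal_ne_top, ENNReal.toReal_ofReal hp]

lemma measurable_eLpNorm_of_uncurry {X : Type*} [MeasurableSpace X] {ν : Measure X} [SFinite ν]
    {q : ℝ} (hq : 0 < q) {u : ℝ → X → ℂ} (hu : Measurable (Function.uncurry u)) :
    Measurable fun s => eLpNorm (u s) (ENNReal.ofReal q) ν := by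
  simp only [eLpNorm_ofReal_exponent hq]
  exact (hu.enorm.pow_const q).lintegral_prod_right'.pow_const _

variable {E : Type*} [NormedAddCommGroup E] [InnerProductSpace ℝ E] [FiniteDimensional ℝ E]
  [MeasurableSpace E] [BorelSpace E]

lemma stronglyMeasurable_schrod_sub {d : ℕ} (t : ℝ) {f : ℝ → E → ℂ}
    (hf : Measurable (Function.uncurry f)) :
    StronglyMeasurable (Function.uncurry fun s => schrod d (t - s) (f s)) := by
  let kernel (z : (ℝ × E) × E) : ℂ := Complex.exp
    (Complex.I * ((‖z.1.2 - z.2‖ ^ 2 : ℝ) : ℂ) / (4 * ((t - z.1.1 : ℝ) : ℂ))) * f z.1.1 z.2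
  have hkernel : Measurable kernel := by
    have : Measurable fun z : (ℝ × E) × E => f z.1.1 z.2 :=
      hf.comp (measurable_fst.fst.prodMk measurable_snd)
    fun_prop
  have hformula : (Function.uncurry fun s => schrod d (t - s) (f s)) = fun z : ℝ × E =>
      if t - z.1 = 0 then f z.1 z.2
      else (4 * (π : ℂ) * Complex.I * ((t - z.1 : ℝ) : ℂ)) ^ (-(d : ℂ) / 2) *
        ∫ y, kernel (z, y) := by
    ext z
    simp only [Function.uncurry, schrod, kernel]
    split_ifs <;> rfl
  rw [hformula]
  refine (Measurable.ite ?_ hf (Measurable.mul (Measurable.pow_const (by fun_prop) _)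
    hkernel.stronglyMeasurable.integral_prod_right'.measurable)).stronglyMeasurable
  exact (measurable_const.sub measurable_fst) (measurableSet_singleton 0)

theorem exists_eLpNorm_integral_schrod_le {d : ℕ} (hd : Module.finrank ℝ E = d)
    {r r' m k : ℝ} (hr : 2 < r) (hrr' : r.HolderConjugate r') (hmk : m.HolderConjugate k)
    (hm : 1 < m * (d * (1 / 2 - 1 / r))) :
    ∃ C : ℝ, 0 < C ∧ ∀ t B : ℝ, 0 < B → ∀ I : Set ℝ, I ≤ᵐ[volume] Iic (t - B) →
      ∀ f : ℝ → E → ℂ, Measurable (Function.uncurry f) →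
        eLpNorm (fun x => ∫ s in I, schrod d (t - s) (f s) x) (ENNReal.ofReal r) volume ≤
          ENNReal.ofReal (C * B ^ (1 / m - d * (1 / 2 - 1 / r))) *
            mixedNorm volume I (ENNReal.ofReal k) (ENNReal.ofReal r') f := by
  obtain ⟨C, hC, hdecay⟩ := exists_eLpNorm_schrod_le hd hr hrr'
  set δ := d * (1 / 2 - 1 / r)
  refine ⟨C * (m * δ - 1) ^ (-(1 / m)), by have := sub_pos.2 hm; positivity,
    fun t B hB I hI f hf => ?_⟩
  calc eLpNorm (fun x => ∫ s in I, schrod d (t - s) (f s) x) (ENNReal.ofReal r) volume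
      ≤ ∫⁻ s in I, eLpNorm (schrod d (t - s) (f s)) (ENNReal.ofReal r) volume :=
        eLpNorm_integral_le_lintegral_eLpNorm (by linarith) (stronglyMeasurable_schrod_sub t hf)
    _ ≤ ∫⁻ s in I, ENNReal.ofReal C * (ENNReal.ofReal ((t - s) ^ (-δ)) *
          eLpNorm (f s) (ENNReal.ofReal r') volume) := by
        refine lintegral_mono_ae ((ae_restrict_le_sub hI).mono fun s hs => ?_)
        have hts : 0 < t - s := hB.trans_le hs
        simpa only [abs_of_pos hts, ENNReal.ofReal_mul hC.le, mul_assoc]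
          using hdecay (t - s) hts.ne' (f s)
    _ = ENNReal.ofReal C * ∫⁻ s in I, ENNReal.ofReal ((t - s) ^ (-δ)) *
          eLpNorm (f s) (ENNReal.ofReal r') volume :=
        lintegral_const_mul' _ _ ENNReal.ofReal_ne_top
    _ ≤ ENNReal.ofReal C * ((∫⁻ s in I, ENNReal.ofReal ((t - s) ^ (-δ)) ^ m) ^ (1 / m) *
          (∫⁻ s in I, eLpNorm (f s) (ENNReal.ofReal r') volume ^ k) ^ (1 / k)) := by
        gcongr
        exact ENNReal.lintegral_mul_le_Lp_mul_Lq _ hmk (by fun_prop)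
          (measurable_eLpNorm_of_uncurry hrr'.symm.pos hf).aemeasurable
    _ ≤ _ := by
        grw [setLIntegral_sub_rpow_neg_rpow_le hB hmk.pos hm hI]
        rw [mixedNorm_ofReal_exponent _ _ hmk.symm.nonneg, mul_assoc C, ENNReal.ofReal_mul hC.le,
          mul_assoc]

end Duhamel

section Nonlinearity

lemma enorm_nonlin {E : Type*} {a : ℝ} (ha : -1 < a) (f : E → ℂ) (x : E) :
    ‖nonlin a f x‖ₑ = ‖f x‖ₑ ^ (a + 1) := by
  have ha' : 0 < a + 1 := by linarith
  have hnorm : ‖nonlin a f x‖ = ‖f x‖ ^ (a + 1) := by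
    rw [nonlin, norm_mul, Complex.norm_real, Real.norm_of_nonneg (by positivity)]
    obtain hfx | hfx := (norm_nonneg (f x)).eq_or_lt
    · simp [← hfx, Real.zero_rpow ha'.ne']
    · rw [Real.rpow_add_one hfx.ne']
  rw [← ofReal_norm, hnorm, ← ENNReal.ofReal_rpow_of_nonneg (norm_nonneg _) ha'.le, ofReal_norm]

variable {X : Type*} [MeasurableSpace X]

lemma measurable_uncurry_nonlin (a : ℝ) {u : ℝ → X → ℂ} (hu : Measurable (Function.uncurry u)) :
    Measurable (Function.uncurry fun s => nonlin a (u s)) := by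
  change Measurable fun z => ((‖Function.uncurry u z‖ ^ a : ℝ) : ℂ) * Function.uncurry u z
  fun_prop

lemma eLpNorm_nonlin {ν : Measure X} {a q : ℝ} (ha : -1 < a) (hq : 0 < q) (f : X → ℂ) :
    eLpNorm (nonlin a f) (ENNReal.ofReal (q / (a + 1))) ν =
      eLpNorm f (ENNReal.ofReal q) ν ^ (a + 1) := by
  have ha' : 0 < a + 1 := by linarith
  simp_rw [eLpNorm_ofReal_exponent (div_pos hq ha'), eLpNorm_ofReal_exponent hq,
    enorm_nonlin ha, ← ENNReal.rpow_mul, mul_div_cancel₀ _ ha'.ne', one_div_div, one_div_mul_eq_div]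

lemma mixedNorm_nonlin (ν : Measure X) (I : Set ℝ) {a p q : ℝ} (ha : -1 < a) (hp : 0 < p)
    (hq : 0 < q) (u : ℝ → X → ℂ) :
    mixedNorm ν I (ENNReal.ofReal (p / (a + 1))) (ENNReal.ofReal (q / (a + 1)))
        (fun s => nonlin a (u s)) =
      mixedNorm ν I (ENNReal.ofReal p) (ENNReal.ofReal q) u ^ (a + 1) := by
  have ha' : 0 < a + 1 := by linarith
  simp_rw [mixedNorm_ofReal_exponent _ _ hp.le, mixedNorm_ofReal_exponent _ _ (div_pos hp ha').le,
    eLpNorm_nonlin ha hq, ← ENNReal.rpow_mul, mul_div_cancel₀ _ ha'.ne', one_div_div,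
    one_div_mul_eq_div]

end Nonlinearity

theorem middle_time_piece_3d_general {E : Type*} [NormedAddCommGroup E] [InnerProductSpace ℝ E]
    [FiniteDimensional ℝ E] [MeasurableSpace E] [BorelSpace E] {d : ℕ}
    (hd : Module.finrank ℝ E = d) {a r p q β : ℝ} (ha : -1 < a) (hr : 2 < r) (hp : a + 1 < p)
    (hq : (a + 1) / q = 1 - 1 / r) (hβ : β = d * (1 / 2 - 1 / r) - (1 - (a + 1) / p))
    (hβ0 : 0 < β) :
    ∃ C : ℝ, 0 < C ∧ ∀ t B : ℝ, 0 < B → ∀ I : Set ℝ, I ≤ᵐ[volume] Iic (t - B) →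
      ∀ u : ℝ → E → ℂ, Measurable (Function.uncurry u) →
        eLpNorm (fun x => ∫ s in I, schrod d (t - s) (nonlin a (u s)) x)
            (ENNReal.ofReal r) volume ≤
          ENNReal.ofReal (C * B ^ (-β)) *
            mixedNorm volume I (ENNReal.ofReal p) (ENNReal.ofReal q) u ^ (a + 1) := by
  have ha' : 0 < a + 1 := by linarith
  have hp0 : 0 < p := ha'.trans hp
  have hrr' : r.HolderConjugate (q / (a + 1)) := by
    rw [Real.holderConjugate_iff, inv_div, hq]
    exact ⟨by linarith, by ring⟩
  have hq0 : 0 < q := by simpa [ha', ha'.not_gt] using (div_pos_iff.1 hrr'.symm.pos)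
  have hk : (p / (a + 1)).HolderConjugate (p / (a + 1)).conjExponent :=
    .conjExponent ((one_lt_div ha').2 hp)
  set m := (p / (a + 1)).conjExponent
  have hm : 1 / m = 1 - (a + 1) / p := by
    have := hk.inv_add_inv_eq_one
    rw [inv_div] at this
    rw [one_div]
    linarith
  have hm1 : 1 < m * (d * (1 / 2 - 1 / r)) := by
    rw [← div_lt_iff₀' hk.symm.pos, hm]
    linarith
  obtain ⟨C, hC, hduhamel⟩ := exists_eLpNorm_integral_schrod_le hd hr hrr' hk.symm hm1
  refine ⟨C, hC, fun t B hB I hI u hu => ?_⟩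
  have key := hduhamel t B hB I hI _ (measurable_uncurry_nonlin a hu)
  rwa [mixedNorm_nonlin _ _ ha hp0 hq0, show 1 / m - d * (1 / 2 - 1 / r) = -β by linarith] at key

/-- **Three-dimensional middle-time piece estimate.**  Fix `2 < r < 6`.  For any `t > 0`,
`B > 0`, any measurable interval `I ⊆ [t/2, max (t/2) (t-B)]`, and any measurable `u` on
`I × ℝ³`, `‖∫_I e^{i(t-s)Δ}(|u|^{4/3}u)(s) ds‖_{L^r_x} ≤ C B^{-3(r-2)/(4r)}
  ‖u‖^{7/3}_{L^{28r/(3(r+6))}_s L^{7r/(3(r-1))}_x(I×ℝ³)}`, with `C = C(r)`. -/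
theorem middle_time_piece_3d (r : ℝ) (hr : 2 < r) (hr6 : r < 6) :
    ∃ C : ℝ, 0 < C ∧
      ∀ t : ℝ, 0 < t → ∀ B : ℝ, 0 < B →
        ∀ I : Set ℝ, MeasurableSet I → I.OrdConnected →
          I ⊆ Set.Icc (t / 2) (max (t / 2) (t - B)) →
          ∀ u : ℝ → EuclideanSpace ℝ (Fin 3) → ℂ, Measurable (Function.uncurry u) →
            eLpNorm (fun x => ∫ s in I, schrod 3 (t - s) (nonlin (4 / 3) (u s)) x)
                (ENNReal.ofReal r) volume ≤
              ENNReal.ofReal (C * B ^ (-(3 * (r - 2) / (4 * r)))) *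
                mixedNorm volume I (ENNReal.ofReal (28 * r / (3 * (r + 6))))
                    (ENNReal.ofReal (7 * r / (3 * (r - 1)))) u ^ ((7 : ℝ) / 3) := by
  have hβ : 3 * (r - 2) / (4 * r) =
      ((3 : ℕ) : ℝ) * (1 / 2 - 1 / r) - (1 - (4 / 3 + 1) / (28 * r / (3 * (r + 6)))) := by
    field_simp
    ring
  obtain ⟨C, hC, h⟩ := middle_time_piece_3d_general (E := EuclideanSpace ℝ (Fin 3)) (a := 4 / 3)
    (p := 28 * r / (3 * (r + 6))) (q := 7 * r / (3 * (r - 1))) finrank_euclideanSpace_fin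
    (by norm_num) hr (by rw [lt_div_iff₀ (by linarith)]; linarith)
    (by have : r - 1 ≠ 0 := by linarith
        field_simp; ring) hβ (by have := sub_pos.2 hr; positivity)
  refine ⟨C, hC, fun t _ B hB I _ _ hI u hu => ?_⟩
  simpa only [show (4 / 3 + 1 : ℝ) = 7 / 3 by norm_num] using
    h t B hB I (ae_le_Iic_of_subset_Icc_max hI) u hu
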